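/- arXiv:2503.15735 — 2 statements merged into one kernel-verified Lean document; each statement's English description precedes it below -/
import Mathlib

section
/- For every even nonnegative integer m, the polynomial P_m(z) = P_m^{(m+1/2, -m-1/2)}(z) has no real zeros. -/
open Finset

/-- Generalized binomial coefficient `binom(u, j) = u(u-1)⋯(u-j+1)/j!`. -/
noncomputable def gbinom (u : ℝ) (j : ℕ) : ℝ :=
  (∏ i ∈ Finset.range j, (u - i)) / (Nat.factorial j)

/-- Jacobi polynomial via the explicit sum formula. -/
noncomputable def jacobiP (n : ℕ) (α β : ℝ) (x : ℝ) : ℝ :=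
  ((2:ℝ)^n)⁻¹ * ∑ k ∈ Finset.range (n+1),
    gbinom ((n:ℝ) + α) (n - k) * gbinom ((n:ℝ) + β) k * (x - 1)^k * (x + 1)^(n - k)

/-!
Suppose `n + β < 0 < n + α + β + 1`. The `k`-th product of binomials in the Jacobi sum is
`binom(n + α, n) * binom(n, k) * (-1) ^ k * (-n - β)ₖ / (α + 1)ₖ`, where `(s)ₖ` is the rising
factorial, and `(-n - β)ₖ / (α + 1)ₖ` is the `k`-th moment of the beta distribution with parameters
`-n - β` and `n + α + β + 1`. By the binomial theorem under the integral sign, for `T` with this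
distribution,
`P_n^{(α,β)}(x) = binom(n + α, n) * 𝔼[((x + 1) / 2 + (1 - x) / 2 * T) ^ n]`,
a form of Euler's integral for `₂F₁`. For even `n` the integrand is nonnegative and vanishes for at
most one value of `T`.
-/

open MeasureTheory ProbabilityTheory
open scoped Nat

section Gbinom

lemma gbinom_eq_descPochhammer_eval_div (u : ℝ) (j : ℕ) :
    gbinom u j = (descPochhammer ℝ j).eval u / j ! := by
  rw [gbinom, descPochhammer_eval_eq_prod_range]

lemma gbinom_neg (p : ℝ) (k : ℕ) :
    gbinom (-p) k = (-1) ^ k * (ascPochhammer ℝ k).eval p / k ! := by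
  rw [gbinom_eq_descPochhammer_eval_div, ← neg_neg p, ascPochhammer_eval_neg_eq_descPochhammer,
    neg_neg, ← mul_assoc, ← mul_pow, neg_one_mul, neg_neg, one_pow, one_mul]

lemma gbinom_natCast_add (α : ℝ) (j : ℕ) :
    gbinom (j + α) j = (ascPochhammer ℝ j).eval (α + 1) / j ! := by
  rw [gbinom_eq_descPochhammer_eval_div, descPochhammer_eval_eq_ascPochhammer, add_sub_cancel_left]

lemma gbinom_natCast_add_pos {α : ℝ} (hα : -1 < α) (j : ℕ) : 0 < gbinom (j + α) j := by
  rw [gbinom_natCast_add]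
  have := ascPochhammer_pos j (α + 1) (by linarith)
  positivity

lemma ascPochhammer_eval_add {R : Type*} [CommSemiring R] (s : R) (k j : ℕ) :
    (ascPochhammer R (k + j)).eval s =
      (ascPochhammer R k).eval s * (ascPochhammer R j).eval (s + k) := by
  simp [← ascPochhammer_mul]

lemma gbinom_natCast_add_sub {α : ℝ} (hα : -1 < α) {n k : ℕ} (hk : k ≤ n) :
    gbinom (n + α) (n - k) =
      gbinom (n + α) n * n.choose k * k ! / (ascPochhammer ℝ k).eval (α + 1) := by
  obtain ⟨j, rfl⟩ := Nat.exists_eq_add_of_le hk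
  have hpos := ascPochhammer_pos k (α + 1) (by linarith)
  have hchoose : ((k + j).choose k : ℝ) * k ! * j ! = (k + j)! := by
    rw [Nat.choose_symm_add]
    exact_mod_cast Nat.add_choose_mul_factorial_mul_factorial k j
  have hshift : ((k + j : ℕ) : ℝ) + α = j + (α + k) := by push_cast; ring
  rw [gbinom_natCast_add α (k + j), Nat.add_sub_cancel_left, hshift, gbinom_natCast_add,
    ascPochhammer_eval_add, ← hchoose, add_right_comm]
  have : ((k + j).choose k : ℝ) ≠ 0 := by exact_mod_cast (Nat.choose_pos hk).ne'
  field_simp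

lemma gbinom_mul_gbinom {α : ℝ} (hα : -1 < α) (β : ℝ) {n k : ℕ} (hk : k ≤ n) :
    gbinom (n + α) (n - k) * gbinom (n + β) k =
      gbinom (n + α) n * n.choose k *
        ((-1) ^ k * ((ascPochhammer ℝ k).eval (-(n + β)) / (ascPochhammer ℝ k).eval (α + 1))) := by
  have hneg := gbinom_neg (-(n + β)) k
  rw [neg_neg] at hneg
  rw [gbinom_natCast_add_sub hα hk, hneg]
  field_simp

end Gbinom

section BetaMoments

lemma Gamma_add_natCast {s : ℝ} (hs : 0 < s) (k : ℕ) :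
    Real.Gamma (s + k) = (ascPochhammer ℝ k).eval s * Real.Gamma s := by
  induction k with
  | zero => simp
  | succ k ih =>
    rw [Nat.cast_succ, ← add_assoc, Real.Gamma_add_one (by positivity), ih,
      ascPochhammer_succ_eval]
    ring

variable {a b : ℝ}

lemma beta_add_natCast (ha : 0 < a) (hb : 0 < b) (k : ℕ) :
    beta (a + k) b =
      (ascPochhammer ℝ k).eval a / (ascPochhammer ℝ k).eval (a + b) * beta a b := by
  rw [beta, beta, add_right_comm, Gamma_add_natCast ha, Gamma_add_natCast (add_pos ha hb)]
  ring

lemma betaPDFReal_nonneg (ha : 0 < a) (hb : 0 < b) (t : ℝ) : 0 ≤ betaPDFReal a b t := by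
  by_cases ht : 0 < t ∧ t < 1
  · exact (betaPDFReal_pos ht.1 ht.2 ha hb).le
  · rw [betaPDFReal, if_neg ht]

lemma integrable_betaPDFReal (ha : 0 < a) (hb : 0 < b) : Integrable (betaPDFReal a b) := by
  refine (lintegral_ofReal_ne_top_iff_integrable (by fun_prop)
    (.of_forall (betaPDFReal_nonneg ha hb))).1 ?_
  exact (lintegral_betaPDF_eq_one ha hb).trans_ne ENNReal.one_ne_top

lemma integral_betaPDFReal (ha : 0 < a) (hb : 0 < b) : ∫ t, betaPDFReal a b t = 1 := by
  rw [integral_eq_lintegral_of_nonneg_ae (.of_forall (betaPDFReal_nonneg ha hb)) (by fun_prop)]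
  exact (ENNReal.toReal_eq_one_iff _).2 (lintegral_betaPDF_eq_one ha hb)

lemma betaPDFReal_mul_pow (ha : 0 < a) (hb : 0 < b) (k : ℕ) (t : ℝ) :
    betaPDFReal a b t * t ^ k =
      (ascPochhammer ℝ k).eval a / (ascPochhammer ℝ k).eval (a + b) *
        betaPDFReal (a + k) b t := by
  by_cases ht : 0 < t ∧ t < 1
  · have hasc := ascPochhammer_pos k a ha
    have hasc' := ascPochhammer_pos k (a + b) (add_pos ha hb)
    rw [betaPDFReal, betaPDFReal, if_pos ht, if_pos ht, beta_add_natCast ha hb, add_sub_right_comm,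
      Real.rpow_add_natCast ht.1.ne']
    field_simp
  · simp [betaPDFReal, ht]

lemma toReal_betaPDF (ha : 0 < a) (hb : 0 < b) (t : ℝ) :
    (betaPDF a b t).toReal = betaPDFReal a b t :=
  ENNReal.toReal_ofReal (betaPDFReal_nonneg ha hb t)

lemma measurable_betaPDF (a b : ℝ) : Measurable (betaPDF a b) :=
  (measurable_betaPDFReal a b).ennreal_ofReal

lemma integrable_betaMeasure_iff (ha : 0 < a) (hb : 0 < b) {f : ℝ → ℝ} :
    Integrable f (betaMeasure a b) ↔ Integrable fun t ↦ betaPDFReal a b t * f t := by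
  simp only [← toReal_betaPDF ha hb]
  exact integrable_withDensity_iff_integrable_smul' (measurable_betaPDF a b)
    (.of_forall fun _ ↦ ENNReal.ofReal_lt_top)

lemma integral_betaMeasure (ha : 0 < a) (hb : 0 < b) (f : ℝ → ℝ) :
    ∫ t, f t ∂betaMeasure a b = ∫ t, betaPDFReal a b t * f t := by
  simp only [← toReal_betaPDF ha hb]
  exact integral_withDensity_eq_integral_toReal_smul (measurable_betaPDF a b)
    (.of_forall fun _ ↦ ENNReal.ofReal_lt_top) f

lemma integrable_pow_betaMeasure (ha : 0 < a) (hb : 0 < b) (k : ℕ) :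
    Integrable (fun t ↦ t ^ k) (betaMeasure a b) := by
  simp only [integrable_betaMeasure_iff ha hb, betaPDFReal_mul_pow ha hb]
  exact (integrable_betaPDFReal (by positivity) hb).const_mul _

lemma integral_pow_betaMeasure (ha : 0 < a) (hb : 0 < b) (k : ℕ) :
    ∫ t, t ^ k ∂betaMeasure a b =
      (ascPochhammer ℝ k).eval a / (ascPochhammer ℝ k).eval (a + b) := by
  simp only [integral_betaMeasure ha hb, betaPDFReal_mul_pow ha hb]
  rw [integral_const_mul, integral_betaPDFReal (by positivity) hb, mul_one]

instance nullSingletonClass_betaMeasure (a b : ℝ) : NullSingletonClass (betaMeasure a b) :=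
  nullSingletonClass_withDensity _

end BetaMoments

section IntegralPow

lemma affine_pow_eq_sum {R : Type*} [CommSemiring R] (c d t : R) (n : ℕ) :
    (c + d * t) ^ n = ∑ k ∈ range (n + 1), n.choose k * d ^ k * c ^ (n - k) * t ^ k := by
  rw [add_comm, add_pow]
  exact sum_congr rfl fun k _ ↦ by ring

variable {μ : Measure ℝ} {n : ℕ}

lemma integrable_affine_pow (hμ : ∀ k ≤ n, Integrable (fun t ↦ t ^ k) μ) (c d : ℝ) :
    Integrable (fun t ↦ (c + d * t) ^ n) μ := by
  simp only [affine_pow_eq_sum]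
  exact integrable_finsetSum _ fun k hk ↦ (hμ k (mem_range_succ_iff.1 hk)).const_mul _

lemma integral_affine_pow (hμ : ∀ k ≤ n, Integrable (fun t ↦ t ^ k) μ) (c d : ℝ) :
    ∫ t, (c + d * t) ^ n ∂μ =
      ∑ k ∈ range (n + 1), n.choose k * d ^ k * c ^ (n - k) * ∫ t, t ^ k ∂μ := by
  simp only [affine_pow_eq_sum]
  rw [integral_finsetSum _ fun k hk ↦ (hμ k (mem_range_succ_iff.1 hk)).const_mul _]
  simp only [integral_const_mul]

lemma ae_affine_ne_zero [NullSingletonClass μ] {c d : ℝ} (hcd : c ≠ 0 ∨ d ≠ 0) :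
    ∀ᵐ t ∂μ, c + d * t ≠ 0 := by
  have hsub : {t | c + d * t = 0}.Subsingleton := by
    intro s (hs : c + d * s = 0) t (ht : c + d * t = 0)
    have hd : d ≠ 0 := by
      rintro rfl
      simp_all
    exact mul_left_cancel₀ hd (by linarith)
  simpa [ae_iff] using hsub.measure_zero μ

lemma integral_pow_pos_of_even {Ω : Type*} [MeasurableSpace Ω] {ν : Measure Ω} [NeZero ν]
    {f : Ω → ℝ} (hn : Even n) (hf : ∀ᵐ ω ∂ν, f ω ≠ 0)
    (hint : Integrable (fun ω ↦ f ω ^ n) ν) : 0 < ∫ ω, f ω ^ n ∂ν := by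
  have hnonneg : 0 ≤ fun ω ↦ f ω ^ n := fun ω ↦ hn.pow_nonneg (f ω)
  refine (integral_nonneg hnonneg).lt_of_ne' fun hzero ↦ ?_
  have hae := (integral_eq_zero_iff_of_nonneg hnonneg hint).1 hzero
  obtain ⟨ω, hω, hω'⟩ := (hf.and hae).exists
  exact pow_ne_zero n hω hω'

end IntegralPow

theorem jacobiP_eq_integral_betaMeasure {n : ℕ} {α β : ℝ} (hβ : n + β < 0)
    (hαβ : 0 < n + α + β + 1) (x : ℝ) :
    jacobiP n α β x = gbinom (n + α) n *
      ∫ t, ((x + 1) / 2 + (1 - x) / 2 * t) ^ n ∂betaMeasure (-(n + β)) (n + α + β + 1) := by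
  have ha : 0 < -(n + β) := neg_pos.2 hβ
  have hsum : -(n + β) + (n + α + β + 1) = α + 1 := by ring
  rw [integral_affine_pow fun k _ ↦ integrable_pow_betaMeasure ha hαβ k, jacobiP, mul_sum, mul_sum]
  refine sum_congr rfl fun k hk ↦ ?_
  have hkn : k ≤ n := mem_range_succ_iff.1 hk
  have hpow : (2 : ℝ) ^ n = 2 ^ k * 2 ^ (n - k) := by rw [← pow_add, Nat.add_sub_cancel' hkn]
  rw [gbinom_mul_gbinom (by linarith) β hkn, integral_pow_betaMeasure ha hαβ, hsum, hpow,
    div_pow, div_pow, ← neg_sub x 1, neg_pow (x - 1)]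
  ring

theorem no_real_zeros_of_even_general {n : ℕ} (hn : Even n) {α β : ℝ} (hβ : n + β < 0)
    (hαβ : 0 < n + α + β + 1) (x : ℝ) : 0 < jacobiP n α β x := by
  have ha : 0 < -(n + β) := neg_pos.2 hβ
  have := isProbabilityMeasureBeta ha hαβ
  have hcd : (x + 1) / 2 ≠ 0 ∨ (1 - x) / 2 ≠ 0 := by
    by_contra! h
    linarith
  rw [jacobiP_eq_integral_betaMeasure hβ hαβ]
  exact mul_pos (gbinom_natCast_add_pos (by linarith) n)
    (integral_pow_pos_of_even hn (ae_affine_ne_zero hcd)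
      (integrable_affine_pow (fun k _ ↦ integrable_pow_betaMeasure ha hαβ k) _ _))

/-- For even `m`, `P_m^{(m+1/2,-m-1/2)}` has no real zeros. -/
theorem no_real_zeros_of_even (m : ℕ) (hm : Even m) :
    ∀ x : ℝ, jacobiP m ((m:ℝ) + 1/2) (-(m:ℝ) - 1/2) x ≠ 0 :=
  fun x ↦ (no_real_zeros_of_even_general hm (by linarith) (by linarith) x).ne'
end

section
/- For every odd positive integer m, the polynomial P_m(z) = P_m^{(m+1/2, -m-1/2)}(z) has exactly one real zero x*, and this zero satisfies x* < -1. -/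
open Finset

/-!
Differentiation sends `P_{n+1}^{(α,β)}` to a positive multiple of `P_n^{(α+1,β+1)}`, and this shift
of parameters preserves the conditions `β < -n` and `0 < n + α + β + 1`, which make `P_n^{(α,β)}`
positive on `[-1, 1]` with positive leading coefficient. Under them, by induction, `P_n^{(α,β)}` is
positive on all of `ℝ` for even `n`: at a global minimum `x₀` outside `[-1, 1]` the dual (raising)
relation expresses `P_n(x₀)` as a positive multiple of `(x₀² - 1) P_n''(x₀)`, and `P_n''` is a
positive multiple of `P_{n-2}^{(α+2,β+2)}`. For odd `n` the derivative is therefore positive, so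
`P_n^{(α,β)}` increases from `-∞` and its only zero lies to the left of `-1`.
-/

open Polynomial Filter

section PolynomialLimits

variable {𝕜 : Type*} [NormedField 𝕜] [LinearOrder 𝕜] [IsStrictOrderedRing 𝕜] [OrderTopology 𝕜]
  {p : 𝕜[X]}

lemma tendsto_eval_atBot_atTop_of_even (hdeg : 0 < p.degree) (heven : Even p.natDegree)
    (hlc : 0 ≤ p.leadingCoeff) : Tendsto (fun x ↦ p.eval x) atBot atTop := by
  have hneg : Tendsto (fun x ↦ (p.comp (-X)).eval x) atTop atTop :=
    tendsto_atTop_of_leadingCoeff_nonneg _ (by simpa using hdeg) (by simpa [heven.neg_one_pow])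
  simpa [Function.comp_def] using hneg.comp tendsto_neg_atBot_atTop

lemma tendsto_eval_atBot_atBot_of_odd (hodd : Odd p.natDegree) (hlc : 0 ≤ p.leadingCoeff) :
    Tendsto (fun x ↦ p.eval x) atBot atBot := by
  have hdeg : 0 < p.degree := natDegree_pos_iff_degree_pos.mp hodd.pos
  have hneg : Tendsto (fun x ↦ (p.comp (-X)).eval x) atTop atBot :=
    tendsto_atBot_of_leadingCoeff_nonpos _ (by simpa using hdeg) (by simpa [hodd.neg_one_pow])
  simpa [Function.comp_def] using hneg.comp tendsto_neg_atBot_atTop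

end PolynomialLimits

lemma exists_forall_eval_le_of_even {p : ℝ[X]} (hdeg : 0 < p.degree) (heven : Even p.natDegree)
    (hlc : 0 ≤ p.leadingCoeff) : ∃ x₀, ∀ x, p.eval x₀ ≤ p.eval x := by
  refine p.continuous.exists_forall_le ?_
  rw [cocompact_eq_atBot_atTop]
  exact (tendsto_eval_atBot_atTop_of_even hdeg heven hlc).sup
    (p.tendsto_atTop_of_leadingCoeff_nonneg hdeg hlc)

section GeneralizedBinomial

variable (u : ℝ) (j : ℕ)

lemma gbinom_zero : gbinom u 0 = 1 := by simp [gbinom]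

lemma gbinom_succ_mul : gbinom u (j + 1) * (j + 1) = gbinom u j * (u - j) := by
  simp only [gbinom, prod_range_succ, Nat.factorial_succ]
  push_cast
  field_simp

variable {u j}

lemma gbinom_pos (h : (j : ℝ) < u + 1) : 0 < gbinom u j := by
  refine div_pos (prod_pos fun i hi ↦ ?_) (by positivity)
  have : (i + 1 : ℝ) ≤ j := by exact_mod_cast mem_range.mp hi
  linarith

lemma neg_one_pow_mul_gbinom_pos (hu : u < 0) : 0 < (-1) ^ j * gbinom u j := by
  have h : (-1) ^ j * gbinom u j = (∏ i ∈ range j, (i - u)) / j.factorial := by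
    simp only [gbinom, ← mul_div_assoc, ← neg_sub u, prod_neg, card_range]
  rw [h]
  exact div_pos (prod_pos fun i _ ↦ by linarith [i.cast_nonneg (α := ℝ)]) (by positivity)

end GeneralizedBinomial

section AntidiagonalSums

variable {R : Type*} [Semiring R] (n : ℕ) (f : ℕ × ℕ → R)

lemma sum_antidiagonal_succ_fst_mul :
    ∑ p ∈ antidiagonal (n + 1), (p.1 : R) * f p =
      ∑ p ∈ antidiagonal n, ((p.1 : R) + 1) * f (p.1 + 1, p.2) := by
  simp [Nat.sum_antidiagonal_succ]

lemma sum_antidiagonal_succ_snd_mul :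
    ∑ p ∈ antidiagonal (n + 1), (p.2 : R) * f p =
      ∑ p ∈ antidiagonal n, ((p.2 : R) + 1) * f (p.1, p.2 + 1) := by
  simp [Nat.sum_antidiagonal_succ']

end AntidiagonalSums

/-- The coefficient of `(x - 1)^k (x + 1)^l`, for `p = (k, l)` with `k + l = n`, in the explicit sum
for `2^n P_n^{(α,β)}`. Indexing by pairs avoids the truncated subtraction `n - k`. -/
noncomputable def jacobiCoeff (n : ℕ) (α β : ℝ) (p : ℕ × ℕ) : ℝ :=
  gbinom (n + α) p.2 * gbinom (n + β) p.1

/-- The Jacobi polynomial `P_n^{(α,β)}` as an element of `ℝ[X]`, so that it can be differentiated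
and has a leading coefficient; `jacobiP n α β` is its evaluation. -/
noncomputable def jacobiPoly (n : ℕ) (α β : ℝ) : ℝ[X] :=
  C ((2 : ℝ) ^ n)⁻¹ *
    ∑ p ∈ antidiagonal n, C (jacobiCoeff n α β p) * ((X - 1) ^ p.1 * (X + 1) ^ p.2)

section Jacobi

lemma jacobiCoeff_succ_fst_mul (k l : ℕ) (α β : ℝ) :
    jacobiCoeff (k + l + 1) α β (k + 1, l) * (k + 1) =
      jacobiCoeff (k + l) (α + 1) (β + 1) (k, l) * (l + β + 1) := by
  have hα : ((k + l + 1 : ℕ) : ℝ) + α = (k + l : ℕ) + (α + 1) := by push_cast; ring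
  have hβ : ((k + l + 1 : ℕ) : ℝ) + β = (k + l : ℕ) + (β + 1) := by push_cast; ring
  have hrec := gbinom_succ_mul ((k + l : ℕ) + (β + 1)) k
  simp only [jacobiCoeff, hα, hβ, mul_assoc, hrec]
  push_cast
  ring

lemma jacobiCoeff_succ_snd_mul (k l : ℕ) (α β : ℝ) :
    jacobiCoeff (k + l + 1) α β (k, l + 1) * (l + 1) =
      jacobiCoeff (k + l) (α + 1) (β + 1) (k, l) * (k + α + 1) := by
  have hα : ((k + l + 1 : ℕ) : ℝ) + α = (k + l : ℕ) + (α + 1) := by push_cast; ring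
  have hβ : ((k + l + 1 : ℕ) : ℝ) + β = (k + l : ℕ) + (β + 1) := by push_cast; ring
  have hrec := gbinom_succ_mul ((k + l : ℕ) + (α + 1)) l
  simp only [jacobiCoeff, hα, hβ, mul_right_comm _ _ ((l : ℝ) + 1), hrec]
  push_cast
  ring

variable (n : ℕ) (α β : ℝ)

lemma eval_jacobiPoly (x : ℝ) :
    (jacobiPoly n α β).eval x =
      (2 ^ n)⁻¹ * ∑ p ∈ antidiagonal n, jacobiCoeff n α β p * ((x - 1) ^ p.1 * (x + 1) ^ p.2) := by
  simp [jacobiPoly, eval_finsetSum]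

lemma jacobiP_eq_eval (x : ℝ) : jacobiP n α β x = (jacobiPoly n α β).eval x := by
  simp only [jacobiP, eval_jacobiPoly, jacobiCoeff, Nat.sum_antidiagonal_eq_sum_range_succ_mk,
    mul_assoc, Nat.succ_eq_add_one]

lemma eval_derivative_jacobiPoly (x : ℝ) :
    (derivative (jacobiPoly n α β)).eval x =
      (2 ^ n)⁻¹ * (∑ p ∈ antidiagonal n,
          p.1 * (jacobiCoeff n α β p * ((x - 1) ^ (p.1 - 1) * (x + 1) ^ p.2)) +
        ∑ p ∈ antidiagonal n,
          p.2 * (jacobiCoeff n α β p * ((x - 1) ^ p.1 * (x + 1) ^ (p.2 - 1)))) := by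
  rw [← sum_add_distrib]
  simp only [jacobiPoly, derivative_C_mul, derivative_sum, eval_mul, eval_C, eval_finsetSum]
  congr! 2 with p
  simp only [derivative_mul, derivative_pow, map_natCast, derivative_sub, derivative_X,
    derivative_one, sub_zero, mul_one, derivative_add, add_zero, eval_add, eval_mul, eval_natCast,
    eval_pow, eval_sub, eval_X, eval_one]
  ring

lemma jacobiPoly_zero : jacobiPoly 0 α β = 1 := by simp [jacobiPoly, jacobiCoeff, gbinom_zero]

lemma derivative_jacobiPoly_succ :
    derivative (jacobiPoly (n + 1) α β) =
      C ((n + α + β + 2) / 2) * jacobiPoly n (α + 1) (β + 1) := by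
  refine Polynomial.funext fun x ↦ ?_
  rw [eval_derivative_jacobiPoly, sum_antidiagonal_succ_fst_mul, sum_antidiagonal_succ_snd_mul,
    ← sum_add_distrib, eval_mul, eval_C, eval_jacobiPoly, mul_left_comm, mul_sum, mul_sum, mul_sum]
  refine sum_congr rfl fun ⟨k, l⟩ hp ↦ ?_
  obtain rfl := mem_antidiagonal.mp hp
  have hfst := jacobiCoeff_succ_fst_mul k l α β
  have hsnd := jacobiCoeff_succ_snd_mul k l α β
  simp only [Nat.add_sub_cancel]
  push_cast
  linear_combination (2 ^ (k + l + 1))⁻¹ * ((x - 1) ^ k * (x + 1) ^ l) * (hfst + hsnd)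

lemma succ_mul_sum_jacobiCoeff (u v : ℝ) :
    (n + 1) * ∑ p ∈ antidiagonal (n + 1), jacobiCoeff (n + 1) α β p * (u ^ p.1 * v ^ p.2) =
      ∑ p ∈ antidiagonal n, jacobiCoeff n (α + 1) (β + 1) p *
        ((p.2 + β + 1) * u + (p.1 + α + 1) * v) * (u ^ p.1 * v ^ p.2) := by
  have heuler : (n + 1) * ∑ p ∈ antidiagonal (n + 1),
        jacobiCoeff (n + 1) α β p * (u ^ p.1 * v ^ p.2) =
      ∑ p ∈ antidiagonal (n + 1), p.1 * (jacobiCoeff (n + 1) α β p * (u ^ p.1 * v ^ p.2)) +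
      ∑ p ∈ antidiagonal (n + 1), p.2 * (jacobiCoeff (n + 1) α β p * (u ^ p.1 * v ^ p.2)) := by
    rw [mul_sum, ← sum_add_distrib]
    refine sum_congr rfl fun p hp ↦ ?_
    rw [← add_mul]
    congr 1
    exact_mod_cast (mem_antidiagonal.mp hp).symm
  rw [heuler, sum_antidiagonal_succ_fst_mul, sum_antidiagonal_succ_snd_mul, ← sum_add_distrib]
  refine sum_congr rfl fun ⟨k, l⟩ hp ↦ ?_
  obtain rfl := mem_antidiagonal.mp hp
  have hfst := jacobiCoeff_succ_fst_mul k l α β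
  have hsnd := jacobiCoeff_succ_snd_mul k l α β
  linear_combination u ^ k * v ^ l * (u * hfst + v * hsnd)

lemma sq_sub_one_mul_derivative_jacobiPoly_add :
    (X ^ 2 - 1) * derivative (jacobiPoly n (α + 1) (β + 1)) +
        (C (α + 1) * (X + 1) + C (β + 1) * (X - 1)) * jacobiPoly n (α + 1) (β + 1) =
      C (2 * (n + 1 : ℝ)) * jacobiPoly (n + 1) α β := by
  refine Polynomial.funext fun x ↦ ?_
  have hpow (y : ℝ) (k : ℕ) : (k : ℝ) * (y * y ^ (k - 1)) = k * y ^ k := by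
    cases k <;> simp [pow_succ']
  have hsum := succ_mul_sum_jacobiCoeff n α β (x - 1) (x + 1)
  simp only [eval_add, eval_sub, eval_mul, eval_C, eval_X, eval_one, eval_pow,
    eval_jacobiPoly, eval_derivative_jacobiPoly]
  calc
    _ = (2 ^ n)⁻¹ * ∑ p ∈ antidiagonal n, jacobiCoeff n (α + 1) (β + 1) p *
        ((p.2 + β + 1) * (x - 1) + (p.1 + α + 1) * (x + 1)) *
          ((x - 1) ^ p.1 * (x + 1) ^ p.2) := by
      rw [← sum_add_distrib, mul_left_comm, mul_left_comm _ (_⁻¹), ← mul_add, mul_sum, mul_sum,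
        ← sum_add_distrib]
      congr! 2 with p
      linear_combination jacobiCoeff n (α + 1) (β + 1) p *
        ((x + 1) * (x + 1) ^ p.2 * hpow (x - 1) p.1 + (x - 1) * (x - 1) ^ p.1 * hpow (x + 1) p.2)
    _ = _ := by
      rw [← hsum]
      ring

variable {n α β}

lemma eval_jacobiPoly_pos_of_mem_Icc (hα : -1 < α) (hβ : β < -n) {x : ℝ}
    (hx : x ∈ Set.Icc (-1) 1) : 0 < (jacobiPoly n α β).eval x := by
  obtain ⟨hx₁, hx₂⟩ := hx
  have h : (jacobiPoly n α β).eval x = (2 ^ n)⁻¹ * ∑ p ∈ antidiagonal n,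
      (-1) ^ p.1 * jacobiCoeff n α β p * ((1 - x) ^ p.1 * (1 + x) ^ p.2) := by
    have hpow (k : ℕ) : (x - 1) ^ k = (-1) ^ k * (1 - x) ^ k := by rw [← mul_pow]; ring
    simp only [eval_jacobiPoly, hpow]
    congr! 2
    ring
  have hcoeff {p : ℕ × ℕ} (hp : p ∈ antidiagonal n) : 0 < (-1) ^ p.1 * jacobiCoeff n α β p := by
    have hle : (p.2 : ℝ) ≤ n := by
      exact_mod_cast (Nat.le_add_left _ _).trans_eq (mem_antidiagonal.mp hp)
    rw [jacobiCoeff, mul_left_comm]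
    exact mul_pos (gbinom_pos (by linarith)) (neg_one_pow_mul_gbinom_pos (by linarith))
  have hl : 0 ≤ 1 - x := by linarith
  have hr : 0 ≤ 1 + x := by linarith
  rw [h]
  refine mul_pos (by positivity) (sum_pos' (fun p hp ↦ ?_) ?_)
  · have := hcoeff hp
    positivity
  · rcases hx₁.eq_or_lt with rfl | hlt
    · have hp : (n, 0) ∈ antidiagonal n := by simp
      exact ⟨(n, 0), hp, mul_pos (hcoeff hp) (by norm_num)⟩
    · have hp : (0, n) ∈ antidiagonal n := by simp
      have hr' : 0 < 1 + x := by linarith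
      exact ⟨(0, n), hp, mul_pos (hcoeff hp) (by simpa using pow_pos hr' n)⟩

lemma natDegree_jacobiPoly_le : (jacobiPoly n α β).natDegree ≤ n := by
  refine natDegree_C_mul_le _ _ |>.trans (natDegree_sum_le_of_forall_le _ _ fun p hp ↦ ?_)
  rw [← mem_antidiagonal.mp hp]
  compute_degree

lemma coeff_jacobiPoly_pos (h : 0 < n + α + β + 1) : 0 < (jacobiPoly n α β).coeff n := by
  induction n generalizing α β with
  | zero => simp [jacobiPoly_zero]
  | succ n ih =>
    push_cast at h
    have hrec := congr_arg (coeff · n) (derivative_jacobiPoly_succ n α β)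
    simp only [coeff_derivative, coeff_C_mul] at hrec
    have hpos : 0 < (jacobiPoly (n + 1) α β).coeff (n + 1) * (n + 1) := by
      rw [hrec]
      exact mul_pos (by linarith) (ih (by linarith))
    exact pos_of_mul_pos_left hpos (by positivity)

lemma natDegree_jacobiPoly (h : 0 < n + α + β + 1) : (jacobiPoly n α β).natDegree = n :=
  natDegree_eq_of_le_of_coeff_ne_zero natDegree_jacobiPoly_le (coeff_jacobiPoly_pos h).ne'

lemma leadingCoeff_jacobiPoly_pos (h : 0 < n + α + β + 1) :
    0 < (jacobiPoly n α β).leadingCoeff := by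
  rw [leadingCoeff, natDegree_jacobiPoly h]
  exact coeff_jacobiPoly_pos h

lemma two_mul_eval_jacobiPoly_of_eval_derivative_eq_zero (h : n + α + β + 3 ≠ 0) {x : ℝ}
    (hx : (derivative (jacobiPoly (n + 2) α β)).eval x = 0) :
    2 * (n + 2) * (jacobiPoly (n + 2) α β).eval x =
      (x ^ 2 - 1) * ((n + α + β + 4) / 2 * (jacobiPoly n (α + 2) (β + 2)).eval x) := by
  have hzero : (jacobiPoly (n + 1) (α + 1) (β + 1)).eval x = 0 := by
    rw [derivative_jacobiPoly_succ, eval_mul, eval_C, mul_eq_zero] at hx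
    refine hx.resolve_left fun hc ↦ h ?_
    push_cast at hc
    linarith
  have hraise := congr_arg (eval x) (sq_sub_one_mul_derivative_jacobiPoly_add (n + 1) α β)
  simp only [derivative_jacobiPoly_succ, eval_add, eval_sub, eval_mul, eval_C, eval_X, eval_one,
    eval_pow, hzero, mul_zero, add_zero, add_assoc, one_add_one_eq_two] at hraise
  push_cast at hraise
  linear_combination -hraise

lemma eval_jacobiPoly_pos_of_even (hn : Even n) (hβ : β < -n) (h : 0 < n + α + β + 1) (x : ℝ) :
    0 < (jacobiPoly n α β).eval x := by
  induction n using Nat.twoStepInduction generalizing α β x with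
  | zero => simp [jacobiPoly_zero]
  | one => exact absurd hn (by decide)
  | more n ih _ =>
    have hdeg := natDegree_jacobiPoly h
    obtain ⟨x₀, hmin⟩ := exists_forall_eval_le_of_even
      (natDegree_pos_iff_degree_pos.mp (by omega)) (by rwa [hdeg])
      (leadingCoeff_jacobiPoly_pos h).le
    refine lt_of_lt_of_le ?_ (hmin x)
    by_cases hmem : x₀ ∈ Set.Icc (-1) 1
    · exact eval_jacobiPoly_pos_of_mem_Icc (by linarith) hβ hmem
    push_cast at hβ h
    have hx₀ : 0 < x₀ ^ 2 - 1 := by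
      rwa [Set.mem_Icc, ← abs_le, ← sq_le_one_iff_abs_le_one, not_le, ← sub_pos] at hmem
    have hcrit : (derivative (jacobiPoly (n + 2) α β)).eval x₀ = 0 := by
      rw [← Polynomial.deriv]
      exact IsLocalMin.deriv_eq_zero (.of_forall hmin)
    have hpos : 0 < (jacobiPoly n (α + 2) (β + 2)).eval x₀ :=
      ih (by simpa [parity_simps] using hn) (by linarith) (by linarith) x₀
    have hprod : 0 < 2 * ((n : ℝ) + 2) * (jacobiPoly (n + 2) α β).eval x₀ := by
      rw [two_mul_eval_jacobiPoly_of_eval_derivative_eq_zero (by linarith) hcrit]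
      exact mul_pos hx₀ (mul_pos (by linarith) hpos)
    exact pos_of_mul_pos_right hprod (by positivity)

lemma strictMono_eval_jacobiPoly_of_odd (hn : Odd n) (hβ : β < -n) (h : 0 < n + α + β + 1) :
    StrictMono fun x ↦ (jacobiPoly n α β).eval x := by
  obtain ⟨k, rfl⟩ := hn
  push_cast at hβ h
  refine strictMono_of_deriv_pos fun x ↦ ?_
  rw [Polynomial.deriv, derivative_jacobiPoly_succ, eval_mul, eval_C]
  push_cast
  exact mul_pos (by linarith) (eval_jacobiPoly_pos_of_even (even_two_mul k)
    (by push_cast; linarith) (by push_cast; linarith) x)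

lemma surjective_eval_jacobiPoly_of_odd (hn : Odd n) (h : 0 < n + α + β + 1) :
    Function.Surjective fun x ↦ (jacobiPoly n α β).eval x := by
  have hdeg := natDegree_jacobiPoly h
  have hlc := (leadingCoeff_jacobiPoly_pos h).le
  exact (jacobiPoly n α β).continuous.surjective
    (tendsto_atTop_of_leadingCoeff_nonneg _
      (natDegree_pos_iff_degree_pos.mp (hdeg.symm ▸ hn.pos)) hlc)
    (tendsto_eval_atBot_atBot_of_odd (hdeg.symm ▸ hn) hlc)

end Jacobi

theorem unique_real_zero_of_odd_general {n : ℕ} (hn : Odd n) {α β : ℝ} (hβ : β < -n)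
    (h : 0 < n + α + β + 1) :
    ∃ x : ℝ, jacobiP n α β x = 0 ∧ x < -1 ∧ ∀ y : ℝ, jacobiP n α β y = 0 → y = x := by
  simp only [jacobiP_eq_eval]
  have hmono := strictMono_eval_jacobiPoly_of_odd hn hβ h
  obtain ⟨x, hx⟩ := surjective_eval_jacobiPoly_of_odd hn h 0
  have hneg_one : 0 < (jacobiPoly n α β).eval (-1) :=
    eval_jacobiPoly_pos_of_mem_Icc (by linarith) hβ (by norm_num)
  exact ⟨x, hx, hmono.lt_iff_lt.mp (hx.trans_lt hneg_one),
    fun y hy ↦ hmono.injective (hy.trans hx.symm)⟩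

/-- For odd `m`, `P_m^{(m+1/2,-m-1/2)}` has exactly one real zero, and it is `< -1`. -/
theorem unique_real_zero_of_odd (m : ℕ) (hm : Odd m) :
    ∃ x : ℝ, jacobiP m ((m:ℝ) + 1/2) (-(m:ℝ) - 1/2) x = 0 ∧ x < -1 ∧
      ∀ y : ℝ, jacobiP m ((m:ℝ) + 1/2) (-(m:ℝ) - 1/2) y = 0 → y = x :=
  unique_real_zero_of_odd_general hm (by linarith) (by linarith [m.cast_nonneg (α := ℝ)])
end
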